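/- arXiv:2601.00377 — 4 statements merged into one kernel-verified Lean document; each statement's English description precedes it below -/
import Mathlib

section
/- Let m, r ≥ 1, let L ∈ ℝ^{m×m} be symmetric with L·𝟙 = 0 (𝟙 ∈ ℝ^m the all-ones vector), and let λ₂ > 0 satisfy vᵀLv ≥ λ₂‖v‖₂² for every v ∈ ℝ^m with Σ_j v_j = 0. Let A, Â ∈ ℝ^{m×r} and set Δ = Â − A. If Σ_{l=1}^r (1/m)(Σ_{j=1}^m Δ_{jl})² ≤ (1/2) Σ_{l=1}^r Σ_{j=1}^m Δ_{jl}², then tr(Âᵀ L Â) − tr(Aᵀ L A) ≥ (λ₂/2)‖Δ‖_F² − 2‖L A‖_F ‖Δ‖_F. -/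
open Matrix

/-- The Euclidean (ℓ²) norm of a real vector. -/
noncomputable def euclNorm {n : Type*} [Fintype n] (v : n → ℝ) : ℝ :=
  Real.sqrt (∑ i, (v i) ^ 2)

/-- The Frobenius norm of a real matrix. -/
noncomputable def frobNorm {m n : Type*} [Fintype m] [Fintype n] (A : Matrix m n ℝ) : ℝ :=
  Real.sqrt (∑ i, ∑ j, (A i j) ^ 2)

/-!
Write `Δ = Â - A`. Since `L` is symmetric, the difference of traces is the quadratic term
`tr (Δᵀ L Δ)` plus twice the cross term `tr (Δᵀ L A)`. Cauchy–Schwarz for the trace pairing bounds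
the cross term by `‖Δ‖_F ‖L A‖_F`. The quadratic term is the sum of the quadratic form of `L` over
the columns of `Δ`; as `L` annihilates constants, each column may be replaced by its centering, to
which the spectral gap applies, and centering a column costs exactly the energy of its mean. The
hypothesis on `Δ` says that at least half of the energy survives.
-/

open scoped BigOperators

section Norms

variable {m n : Type*} [Fintype m] [Fintype n]

lemma euclNorm_sq (v : n → ℝ) : euclNorm v ^ 2 = ∑ i, v i ^ 2 :=
  Real.sq_sqrt (by positivity)

lemma abs_dotProduct_le_euclNorm_mul_euclNorm (v w : n → ℝ) :
    |v ⬝ᵥ w| ≤ euclNorm v * euclNorm w := by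
  rw [euclNorm, euclNorm, ← Real.sqrt_mul (by positivity)]
  exact Real.abs_le_sqrt (Finset.sum_mul_sq_le_sq_mul_sq Finset.univ v w)

lemma euclNorm_balance_sq (v : n → ℝ) :
    euclNorm (Fintype.balance v) ^ 2
      = euclNorm v ^ 2 - 1 / (Fintype.card n : ℝ) * (∑ i, v i) ^ 2 := by
  set c : ℝ := 𝔼 i, v i
  have card_mul_mean : Fintype.card n * c = ∑ i, v i := Fintype.card_mul_expect v
  have mean_eq : c = (∑ i, v i) / Fintype.card n := Fintype.expect_eq_sum_div_card v
  calc euclNorm (Fintype.balance v) ^ 2 = ∑ i, (v i - c) ^ 2 := euclNorm_sq _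
    _ = ∑ i, v i ^ 2 - 2 * c * ∑ i, v i + c * (Fintype.card n * c) := by
      simp only [sub_sq, mul_right_comm _ _ c, Finset.sum_add_distrib, Finset.sum_sub_distrib,
        ← Finset.mul_sum, Finset.sum_const, Finset.card_univ, nsmul_eq_mul]
      ring
    _ = euclNorm v ^ 2 - 1 / (Fintype.card n : ℝ) * (∑ i, v i) ^ 2 := by
      rw [card_mul_mean, euclNorm_sq, mean_eq]
      ring

lemma frobNorm_sq_eq_sum_col (A : Matrix m n ℝ) : frobNorm A ^ 2 = ∑ j, ∑ i, A i j ^ 2 := by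
  rw [frobNorm, Real.sq_sqrt (by positivity), Finset.sum_comm]

lemma frobNorm_sq_eq_sum_euclNorm_col_sq (A : Matrix m n ℝ) :
    frobNorm A ^ 2 = ∑ j, euclNorm (A.col j) ^ 2 := by
  simp only [frobNorm_sq_eq_sum_col, euclNorm_sq, col_apply]

lemma frobNorm_eq_euclNorm_vec (A : Matrix m n ℝ) : frobNorm A = euclNorm A.vec := by
  rw [frobNorm, euclNorm, Finset.sum_comm, Fintype.sum_prod_type]
  rfl

lemma abs_trace_transpose_mul_le_frobNorm_mul_frobNorm (A B : Matrix m n ℝ) :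
    |trace (Aᵀ * B)| ≤ frobNorm A * frobNorm B := by
  rw [← vec_dotProduct_vec, frobNorm_eq_euclNorm_vec, frobNorm_eq_euclNorm_vec]
  exact abs_dotProduct_le_euclNorm_mul_euclNorm A.vec B.vec

end Norms

section QuadraticForms

variable {m n R : Type*} [Fintype m] [Fintype n]

lemma trace_transpose_mul_mul_eq_sum_col [NonUnitalSemiring R] (L : Matrix m m R)
    (D : Matrix m n R) : trace (Dᵀ * L * D) = ∑ j, D.col j ⬝ᵥ L *ᵥ D.col j := by
  rw [Matrix.mul_assoc]
  rfl

lemma trace_transpose_mul_mul_sub_trace_transpose_mul_mul [CommRing R] {L : Matrix m m R}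
    (hL : L.IsSymm) (A B : Matrix m n R) :
    trace (Bᵀ * L * B) - trace (Aᵀ * L * A)
      = trace ((B - A)ᵀ * L * (B - A)) + 2 * trace ((B - A)ᵀ * (L * A)) := by
  have cross_symm : trace (Aᵀ * L * B) = trace (Bᵀ * L * A) := by
    rw [← trace_transpose, transpose_mul, transpose_mul, transpose_transpose, hL.eq,
      Matrix.mul_assoc]
  simp only [← Matrix.mul_assoc, transpose_sub, Matrix.sub_mul, Matrix.mul_sub, trace_sub,
    cross_symm]
  ring

lemma sub_dotProduct_mulVec_sub_of_mulVec_eq_zero [CommRing R] {L : Matrix m m R}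
    (hL : L.IsSymm) {u : m → R} (hu : L *ᵥ u = 0) (v : m → R) :
    (v - u) ⬝ᵥ L *ᵥ (v - u) = v ⬝ᵥ L *ᵥ v := by
  have cross_eq_zero : u ⬝ᵥ L *ᵥ v = 0 := by
    rw [dotProduct_mulVec, ← mulVec_transpose, hL.eq, hu, zero_dotProduct]
  rw [mulVec_sub, hu, sub_zero, sub_dotProduct, cross_eq_zero, sub_zero]

lemma balance_dotProduct_mulVec_balance [CommRing R] [Module ℚ≥0 R] {L : Matrix m m R}
    (hL : L.IsSymm) (hL_one : L *ᵥ 1 = 0) (v : m → R) :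
    Fintype.balance v ⬝ᵥ L *ᵥ Fintype.balance v = v ⬝ᵥ L *ᵥ v := by
  refine sub_dotProduct_mulVec_sub_of_mulVec_eq_zero hL ?_ v
  have const_eq_smul_one : Function.const m (𝔼 i, v i) = (𝔼 i, v i) • (1 : m → R) := by
    ext; simp
  rw [const_eq_smul_one, mulVec_smul, hL_one, smul_zero]

end QuadraticForms

section SpectralGap

variable {V ι : Type*} [Fintype V] [Fintype ι] {L : Matrix V V ℝ} {lam : ℝ}

lemma spectralGap_mul_le_dotProduct_mulVec (hL : L.IsSymm) (hL_one : L *ᵥ 1 = 0)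
    (hgap : ∀ v : V → ℝ, ∑ j, v j = 0 → lam * euclNorm v ^ 2 ≤ v ⬝ᵥ L *ᵥ v) (v : V → ℝ) :
    lam * (euclNorm v ^ 2 - 1 / (Fintype.card V : ℝ) * (∑ j, v j) ^ 2) ≤ v ⬝ᵥ L *ᵥ v := by
  rw [← euclNorm_balance_sq, ← balance_dotProduct_mulVec_balance hL hL_one]
  exact hgap _ (Fintype.sum_balance v)

lemma spectralGap_mul_le_trace_transpose_mul_mul (hL : L.IsSymm) (hL_one : L *ᵥ 1 = 0)
    (hgap : ∀ v : V → ℝ, ∑ j, v j = 0 → lam * euclNorm v ^ 2 ≤ v ⬝ᵥ L *ᵥ v)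
    (D : Matrix V ι ℝ) :
    lam * (frobNorm D ^ 2 - ∑ l, 1 / (Fintype.card V : ℝ) * (∑ j, D j l) ^ 2)
      ≤ trace (Dᵀ * L * D) := by
  rw [trace_transpose_mul_mul_eq_sum_col, frobNorm_sq_eq_sum_euclNorm_col_sq,
    ← Finset.sum_sub_distrib, Finset.mul_sum]
  exact Finset.sum_le_sum fun l _ =>
    spectralGap_mul_le_dotProduct_mulVec hL hL_one hgap (D.col l)

theorem trace_graph_laplacian_difference_lower_bound_general
    (hL : L.IsSymm) (hL_one : L *ᵥ 1 = 0)
    (hgap : ∀ v : V → ℝ, ∑ j, v j = 0 → lam * euclNorm v ^ 2 ≤ v ⬝ᵥ L *ᵥ v)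
    (A Ahat : Matrix V ι ℝ) :
    lam * (frobNorm (Ahat - A) ^ 2
          - ∑ l, 1 / (Fintype.card V : ℝ) * (∑ j, (Ahat - A) j l) ^ 2)
        - 2 * frobNorm (L * A) * frobNorm (Ahat - A)
      ≤ trace (Ahatᵀ * L * Ahat) - trace (Aᵀ * L * A) := by
  have quadratic := spectralGap_mul_le_trace_transpose_mul_mul hL hL_one hgap (Ahat - A)
  have cross := neg_le_of_abs_le
    (abs_trace_transpose_mul_le_frobNorm_mul_frobNorm (Ahat - A) (L * A))
  rw [trace_transpose_mul_mul_sub_trace_transpose_mul_mul hL]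
  linarith

end SpectralGap

/-- Lower bound on the difference of graph-regularization terms: if `L` is
symmetric, annihilates the all-ones vector, with a spectral-gap `λ₂ > 0` on
zero-sum vectors, and `Δ = Â − A` satisfies the column-mean domination condition,
then `tr(Âᵀ L Â) − tr(Aᵀ L A) ≥ (λ₂/2)‖Δ‖_F² − 2‖L A‖_F ‖Δ‖_F`. -/
theorem trace_graph_laplacian_difference_lower_bound
    (m r : ℕ) (hm : 1 ≤ m) (hr : 1 ≤ r)
    (L : Matrix (Fin m) (Fin m) ℝ) (hLsymm : Lᵀ = L)
    (hLone : L.mulVec (fun _ => 1) = 0)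
    (lam₂ : ℝ) (hlam₂ : 0 < lam₂)
    (hgap : ∀ v : Fin m → ℝ, (∑ j, v j) = 0 → lam₂ * euclNorm v ^ 2 ≤ v ⬝ᵥ L.mulVec v)
    (A Ahat : Matrix (Fin m) (Fin r) ℝ)
    (hΔ : ∑ l, (1 / (m : ℝ)) * (∑ j, (Ahat - A) j l) ^ 2
            ≤ (1 / 2) * ∑ l, ∑ j, ((Ahat - A) j l) ^ 2) :
    lam₂ / 2 * frobNorm (Ahat - A) ^ 2 - 2 * frobNorm (L * A) * frobNorm (Ahat - A)
      ≤ Matrix.trace (Ahatᵀ * L * Ahat) - Matrix.trace (Aᵀ * L * A) := by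
  have bound := trace_graph_laplacian_difference_lower_bound_general hLsymm hLone hgap A Ahat
  rw [Fintype.card_fin] at bound
  rw [← frobNorm_sq_eq_sum_col] at hΔ
  linarith [mul_le_mul_of_nonneg_left hΔ hlam₂.le]
end

section
/- Let c > 0 and m, p, r₁, r₂, r₃ ≥ 1. Let A₁, Â₁ ∈ ℝ^{m×r₁}, A₂, Â₂ ∈ ℝ^{m×r₂}, and A₃, Â₃ ∈ ℝ^{p×r₃} all have orthonormal columns. Let g and ĝ be vectors indexed by the product type Fin r₁ × Fin r₃ × Fin r₂ (matching the column index of the Kronecker product A₁ ⊗ A₃ ⊗ A₂) whose entries are all bounded in absolute value by c. Then ‖(Â₁ ⊗ Â₃ ⊗ Â₂) ĝ − (A₁ ⊗ A₃ ⊗ A₂) g‖₂² ≤ 2‖ĝ − g‖₂² + 6 c² r₁ r₂ r₃ (‖Â₁ − A₁‖_F² + ‖Â₂ − A₂‖_F² + ‖Â₃ − A₃‖_F²). -/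
open Matrix
open scoped Kronecker

/-!
Changing the factors of a Kronecker product one at a time gives
`A' ⊗ B' - A ⊗ B = (A' - A) ⊗ B' + A ⊗ (B' - B)`, so for contractions the spectral norm of the
change in the product is at most the sum of the spectral norms of the changes in the factors. Hence
`K̂ĝ - Kg = K̂(ĝ - g) + (K̂ - K)g` has norm at most `‖ĝ - g‖ + (δ₁ + δ₂ + δ₃) ‖g‖` with
`δᵢ = ‖Âᵢ - Aᵢ‖`. Squaring this sum of two terms costs the factor `2`, squaring `δ₁ + δ₂ + δ₃`
another `3`, and the entrywise bound turns `‖g‖²` into `c² r₁ r₂ r₃`.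
-/

lemma kronecker_mulVec_apply {R l m n k : Type*} [NonUnitalSemiring R] [Fintype n] [Fintype k]
    (A : Matrix l n R) (B : Matrix m k R) (x : n × k → R) (i : l) (j : m) :
    ((A ⊗ₖ B) *ᵥ x) (i, j) = (A *ᵥ fun s => (B *ᵥ fun t => x (s, t)) j) i := by
  simp only [mulVec, dotProduct, Fintype.sum_prod_type, kronecker_apply, Finset.mul_sum, mul_assoc]

lemma kronecker_sub_kronecker {R l m n k : Type*} [NonUnitalNonAssocRing R]
    (A A' : Matrix l n R) (B B' : Matrix m k R) :
    A' ⊗ₖ B' - A ⊗ₖ B = (A' - A) ⊗ₖ B' + A ⊗ₖ (B' - B) := by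
  ext ⟨i, j⟩ ⟨s, t⟩
  simp only [Matrix.sub_apply, Matrix.add_apply, kronecker_apply, sub_mul, mul_sub,
    sub_add_sub_cancel]

section L2Operator

open WithLp
open scoped Matrix.Norms.L2Operator

variable {𝕜 l m n k : Type*} [RCLike 𝕜] [Fintype l] [Fintype m] [Fintype n] [Fintype k]
  [DecidableEq n] [DecidableEq k]

lemma norm_toLp_mulVec_le (A : Matrix m n 𝕜) (x : n → 𝕜) :
    ‖toLp 2 (A *ᵥ x)‖ ≤ ‖A‖ * ‖toLp 2 x‖ :=
  l2_opNorm_mulVec A (toLp 2 x)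

lemma sum_norm_sq_mulVec_le (A : Matrix m n 𝕜) (x : n → 𝕜) :
    ∑ i, ‖(A *ᵥ x) i‖ ^ 2 ≤ ‖A‖ ^ 2 * ∑ j, ‖x j‖ ^ 2 := by
  have h := pow_le_pow_left₀ (norm_nonneg _) (norm_toLp_mulVec_le A x) 2
  simpa only [mul_pow, EuclideanSpace.norm_sq_eq] using h

lemma l2_opNorm_le_of_sum_norm_sq_mulVec_le {A : Matrix m n 𝕜} {b : ℝ} (hb : 0 ≤ b)
    (h : ∀ x : n → 𝕜, ∑ i, ‖(A *ᵥ x) i‖ ^ 2 ≤ b ^ 2 * ∑ j, ‖x j‖ ^ 2) : ‖A‖ ≤ b := by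
  rw [l2_opNorm_def]
  refine ContinuousLinearMap.opNorm_le_bound _ hb fun x => ?_
  refine le_of_sq_le_sq ?_ (by positivity)
  rw [mul_pow, EuclideanSpace.norm_sq_eq, EuclideanSpace.norm_sq_eq]
  exact h (ofLp x)

lemma l2_opNorm_le_one_of_conjTranspose_mul_self_eq_one {A : Matrix m n 𝕜} (hA : Aᴴ * A = 1) :
    ‖A‖ ≤ 1 := by
  have h_one : ‖(1 : Matrix n n 𝕜)‖ ≤ 1 := by
    rw [← diagonal_one, l2_opNorm_diagonal]
    exact (pi_norm_const_le (1 : 𝕜)).trans norm_one.le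
  rw [← abs_norm, ← sq_le_one_iff_abs_le_one, sq, ← l2_opNorm_conjTranspose_mul_self, hA]
  exact h_one

lemma l2_opNorm_le_one_of_transpose_mul_self_eq_one {A : Matrix m n ℝ} (hA : Aᵀ * A = 1) :
    ‖A‖ ≤ 1 :=
  l2_opNorm_le_one_of_conjTranspose_mul_self_eq_one
    (by rwa [conjTranspose_eq_transpose_of_trivial])

lemma norm_toLp_mulVec_sub_mulVec_le (A A' : Matrix m n 𝕜) (x x' : n → 𝕜) :
    ‖toLp 2 (A' *ᵥ x' - A *ᵥ x)‖ ≤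
      ‖A'‖ * ‖toLp 2 (x' - x)‖ + ‖A' - A‖ * ‖toLp 2 x‖ := by
  have h_split : A' *ᵥ x' - A *ᵥ x = A' *ᵥ (x' - x) + (A' - A) *ᵥ x := by
    rw [mulVec_sub, sub_mulVec]
    abel
  rw [h_split, toLp_add]
  exact norm_add_le_of_le (norm_toLp_mulVec_le _ _) (norm_toLp_mulVec_le _ _)

lemma l2_opNorm_kronecker_le (A : Matrix l n 𝕜) (B : Matrix m k 𝕜) : ‖A ⊗ₖ B‖ ≤ ‖A‖ * ‖B‖ := by
  refine l2_opNorm_le_of_sum_norm_sq_mulVec_le (by positivity) fun x => ?_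
  calc ∑ p, ‖((A ⊗ₖ B) *ᵥ x) p‖ ^ 2
    _ = ∑ j, ∑ i, ‖(A *ᵥ fun s => (B *ᵥ fun t => x (s, t)) j) i‖ ^ 2 := by
      simp only [Fintype.sum_prod_type_right, kronecker_mulVec_apply]
    _ ≤ ∑ j, ‖A‖ ^ 2 * ∑ s, ‖(B *ᵥ fun t => x (s, t)) j‖ ^ 2 :=
      Finset.sum_le_sum fun _ _ => sum_norm_sq_mulVec_le _ _
    _ = ‖A‖ ^ 2 * ∑ s, ∑ j, ‖(B *ᵥ fun t => x (s, t)) j‖ ^ 2 := by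
      rw [← Finset.mul_sum, Finset.sum_comm]
    _ ≤ ‖A‖ ^ 2 * ∑ s, ‖B‖ ^ 2 * ∑ t, ‖x (s, t)‖ ^ 2 := by
      gcongr
      exact sum_norm_sq_mulVec_le _ _
    _ = (‖A‖ * ‖B‖) ^ 2 * ∑ q, ‖x q‖ ^ 2 := by
      rw [← Finset.mul_sum, Fintype.sum_prod_type, mul_pow, mul_assoc]

lemma l2_opNorm_kronecker_le_one {A : Matrix l n 𝕜} {B : Matrix m k 𝕜} (hA : ‖A‖ ≤ 1)
    (hB : ‖B‖ ≤ 1) : ‖A ⊗ₖ B‖ ≤ 1 :=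
  (l2_opNorm_kronecker_le A B).trans (mul_le_one₀ hA (norm_nonneg B) hB)

lemma l2_opNorm_kronecker_sub_kronecker_le {A A' : Matrix l n 𝕜} {B B' : Matrix m k 𝕜}
    (hA : ‖A‖ ≤ 1) (hB' : ‖B'‖ ≤ 1) : ‖A' ⊗ₖ B' - A ⊗ₖ B‖ ≤ ‖A' - A‖ + ‖B' - B‖ := by
  rw [kronecker_sub_kronecker]
  refine norm_add_le_of_le ((l2_opNorm_kronecker_le _ _).trans ?_)
    ((l2_opNorm_kronecker_le _ _).trans ?_)
  · exact mul_le_of_le_one_right (norm_nonneg _) hB'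
  · exact mul_le_of_le_one_left (norm_nonneg _) hA

end L2Operator

lemma add_add_sq_le {R : Type*} [CommRing R] [LinearOrder R] [IsStrictOrderedRing R] (x y z : R) :
    (x + y + z) ^ 2 ≤ 3 * (x ^ 2 + y ^ 2 + z ^ 2) := by
  linarith [sq_nonneg (x - y), sq_nonneg (x - z), sq_nonneg (y - z)]

section EuclFrob

variable {m n : Type*} [Fintype m] [Fintype n]

lemma euclNorm_eq_norm_toLp (v : n → ℝ) : euclNorm v = ‖WithLp.toLp 2 v‖ := by
  simp only [euclNorm, EuclideanSpace.norm_eq, Real.norm_eq_abs, sq_abs]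

lemma euclNorm_sq_le_of_abs_le {v : n → ℝ} {c : ℝ} (hv : ∀ i, |v i| ≤ c) :
    euclNorm v ^ 2 ≤ c ^ 2 * Fintype.card n := by
  rw [euclNorm, Real.sq_sqrt (by positivity), mul_comm, ← nsmul_eq_mul]
  exact Finset.sum_le_card_nsmul _ _ _ fun i _ => sq_le_sq.mpr ((hv i).trans (le_abs_self c))

open scoped Matrix.Norms.L2Operator in
lemma l2_opNorm_le_frobNorm [DecidableEq n] (A : Matrix m n ℝ) : ‖A‖ ≤ frobNorm A := by
  refine l2_opNorm_le_of_sum_norm_sq_mulVec_le (Real.sqrt_nonneg _) fun x => ?_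
  simp only [frobNorm, Real.norm_eq_abs, sq_abs]
  rw [Real.sq_sqrt (by positivity), Finset.sum_mul]
  exact Finset.sum_le_sum fun i _ => Finset.sum_mul_sq_le_sq_mul_sq _ _ _

end EuclFrob

open scoped Matrix.Norms.L2Operator in
theorem kronecker_perturbation_sq_bound_general
    {m₁ m₂ m₃ n₁ n₂ n₃ : Type*} [Fintype m₁] [Fintype m₂] [Fintype m₃]
    [Fintype n₁] [Fintype n₂] [Fintype n₃] [DecidableEq n₁] [DecidableEq n₂] [DecidableEq n₃]
    {A₁ Ahat₁ : Matrix m₁ n₁ ℝ} {A₂ Ahat₂ : Matrix m₂ n₂ ℝ} {A₃ Ahat₃ : Matrix m₃ n₃ ℝ}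
    (hA₁ : ‖A₁‖ ≤ 1) (hAhat₁ : ‖Ahat₁‖ ≤ 1) (hAhat₂ : ‖Ahat₂‖ ≤ 1)
    (hA₃ : ‖A₃‖ ≤ 1) (hAhat₃ : ‖Ahat₃‖ ≤ 1) (g ghat : n₁ × n₃ × n₂ → ℝ) :
    euclNorm ((Ahat₁ ⊗ₖ (Ahat₃ ⊗ₖ Ahat₂)) *ᵥ ghat - (A₁ ⊗ₖ (A₃ ⊗ₖ A₂)) *ᵥ g) ^ 2
      ≤ 2 * euclNorm (ghat - g) ^ 2 + 6 * euclNorm g ^ 2 *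
          (frobNorm (Ahat₁ - A₁) ^ 2 + frobNorm (Ahat₂ - A₂) ^ 2 + frobNorm (Ahat₃ - A₃) ^ 2) := by
  have h_norm : ‖Ahat₁ ⊗ₖ (Ahat₃ ⊗ₖ Ahat₂)‖ ≤ 1 :=
    l2_opNorm_kronecker_le_one hAhat₁ (l2_opNorm_kronecker_le_one hAhat₃ hAhat₂)
  have h_diff : ‖Ahat₁ ⊗ₖ (Ahat₃ ⊗ₖ Ahat₂) - A₁ ⊗ₖ (A₃ ⊗ₖ A₂)‖
      ≤ frobNorm (Ahat₁ - A₁) + frobNorm (Ahat₂ - A₂) + frobNorm (Ahat₃ - A₃) := by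
    grw [l2_opNorm_kronecker_sub_kronecker_le hA₁ (l2_opNorm_kronecker_le_one hAhat₃ hAhat₂),
      l2_opNorm_kronecker_sub_kronecker_le hA₃ hAhat₂, add_comm ‖Ahat₃ - A₃‖, ← add_assoc]
    gcongr <;> exact l2_opNorm_le_frobNorm _
  calc euclNorm ((Ahat₁ ⊗ₖ (Ahat₃ ⊗ₖ Ahat₂)) *ᵥ ghat - (A₁ ⊗ₖ (A₃ ⊗ₖ A₂)) *ᵥ g) ^ 2
    _ ≤ (euclNorm (ghat - g) + (frobNorm (Ahat₁ - A₁) + frobNorm (Ahat₂ - A₂)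
          + frobNorm (Ahat₃ - A₃)) * euclNorm g) ^ 2 := by
      simp only [euclNorm_eq_norm_toLp]
      grw [norm_toLp_mulVec_sub_mulVec_le, h_norm, h_diff, one_mul]
    _ ≤ 2 * (euclNorm (ghat - g) ^ 2 + 3 * (frobNorm (Ahat₁ - A₁) ^ 2 + frobNorm (Ahat₂ - A₂) ^ 2
          + frobNorm (Ahat₃ - A₃) ^ 2) * euclNorm g ^ 2) := by
      grw [add_sq_le, mul_pow, add_add_sq_le]
    _ = _ := by ring

/-- Kronecker perturbation bound for the sparse Tucker VAR estimator:
`‖(Â₁ ⊗ Â₃ ⊗ Â₂) ĝ − (A₁ ⊗ A₃ ⊗ A₂) g‖₂²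
  ≤ 2‖ĝ − g‖₂² + 6 c² r₁ r₂ r₃ (‖Â₁ − A₁‖_F² + ‖Â₂ − A₂‖_F² + ‖Â₃ − A₃‖_F²)`,
where all factor matrices have orthonormal columns and the entries of `g, ĝ`
are bounded by `c`. -/
theorem kronecker_perturbation_sq_bound
    (m p r₁ r₂ r₃ : ℕ) (hm : 1 ≤ m) (hp : 1 ≤ p)
    (hr₁ : 1 ≤ r₁) (hr₂ : 1 ≤ r₂) (hr₃ : 1 ≤ r₃)
    (c : ℝ) (hc : 0 < c)
    (A₁ Ahat₁ : Matrix (Fin m) (Fin r₁) ℝ)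
    (A₂ Ahat₂ : Matrix (Fin m) (Fin r₂) ℝ)
    (A₃ Ahat₃ : Matrix (Fin p) (Fin r₃) ℝ)
    (hA₁ : A₁ᵀ * A₁ = 1) (hAhat₁ : Ahat₁ᵀ * Ahat₁ = 1)
    (hA₂ : A₂ᵀ * A₂ = 1) (hAhat₂ : Ahat₂ᵀ * Ahat₂ = 1)
    (hA₃ : A₃ᵀ * A₃ = 1) (hAhat₃ : Ahat₃ᵀ * Ahat₃ = 1)
    (g ghat : Fin r₁ × Fin r₃ × Fin r₂ → ℝ)
    (hg : ∀ j, |g j| ≤ c) (hghat : ∀ j, |ghat j| ≤ c) :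
    euclNorm ((Ahat₁ ⊗ₖ (Ahat₃ ⊗ₖ Ahat₂)).mulVec ghat
              - (A₁ ⊗ₖ (A₃ ⊗ₖ A₂)).mulVec g) ^ 2
      ≤ 2 * euclNorm (ghat - g) ^ 2
        + 6 * c ^ 2 * ((r₁ : ℝ) * (r₂ : ℝ) * (r₃ : ℝ)) *
            (frobNorm (Ahat₁ - A₁) ^ 2 + frobNorm (Ahat₂ - A₂) ^ 2
              + frobNorm (Ahat₃ - A₃) ^ 2) := by
  have h_core : euclNorm g ^ 2 ≤ c ^ 2 * ((r₁ : ℝ) * r₂ * r₃) :=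
    (euclNorm_sq_le_of_abs_le hg).trans_eq (by
      simp only [Fintype.card_prod, Fintype.card_fin, Nat.cast_mul]
      ring)
  grw [kronecker_perturbation_sq_bound_general
    (l2_opNorm_le_one_of_transpose_mul_self_eq_one hA₁)
    (l2_opNorm_le_one_of_transpose_mul_self_eq_one hAhat₁)
    (l2_opNorm_le_one_of_transpose_mul_self_eq_one hAhat₂)
    (l2_opNorm_le_one_of_transpose_mul_self_eq_one hA₃)
    (l2_opNorm_le_one_of_transpose_mul_self_eq_one hAhat₃) g ghat, h_core, ← mul_assoc]
end

section
/- Let T ≥ 1, and for t = 1,…,T let y_t ∈ ℝ^m and x_t ∈ ℝ^{p·m} (indexed by Fin p × Fin m). Let A₁ ∈ ℝ^{m×r₁}, A₂ ∈ ℝ^{m×r₂}, A₃ ∈ ℝ^{p×r₃} have orthonormal columns, and set K = A₃ ⊗ A₂. For a matrix G ∈ ℝ^{r₁×(r₃·r₂)} (the mode-1 matricized core, with columns indexed by Fin r₃ × Fin r₂) define the partial gradient of the least-squares loss Q(G) = (1/2T) Σ_{t=1}^T ‖y_t − A₁ G Kᵀ x_t‖₂² by ∇Q(G) = (1/T) Σ_{t=1}^T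 A₁ᵀ (A₁ G Kᵀ x_t − y_t) x_tᵀ K. Then for all G¹, G², ‖∇Q(G¹) − ∇Q(G²)‖_F ≤ L₁ ‖G¹ − G²‖_F, where L₁ = (1/T) Σ_{t=1}^T ‖x_t‖₂². -/
open Matrix
open scoped Kronecker

/-!
The gradient is affine in `G`. With `D = G₁ - G₂` and `zₜ = Kᵀ xₜ`, observation `t` contributes, up
to its weight, the rank-one matrix `(Aᵀ A D zₜ) zₜᵀ` to `∇Q(G₁) - ∇Q(G₂)`. The Frobenius norm of a
rank-one matrix is the product of the Euclidean norms of its factors, so this contribution is at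
most `‖A‖² ‖D‖_F ‖zₜ‖₂² ≤ ‖A‖² ‖K‖² ‖xₜ‖₂² ‖D‖_F`. Matrices with orthonormal columns have spectral
norm at most one, and orthonormality of columns passes to Kronecker products.
-/

section FrobeniusNorm

variable {ι κ τ : Type*} [Fintype ι] [Fintype κ]

lemma euclNorm_eq_norm (v : ι → ℝ) : euclNorm v = ‖WithLp.toLp 2 v‖ := by
  simp only [euclNorm, EuclideanSpace.norm_eq, Real.norm_eq_abs, sq_abs]

lemma euclNorm_nonneg (v : ι → ℝ) : 0 ≤ euclNorm v :=
  Real.sqrt_nonneg _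

lemma frobNorm_nonneg (M : Matrix ι κ ℝ) : 0 ≤ frobNorm M :=
  Real.sqrt_nonneg _

lemma frobNorm_vecMulVec (u : ι → ℝ) (v : κ → ℝ) :
    frobNorm (vecMulVec u v) = euclNorm u * euclNorm v := by
  simp only [frobNorm, euclNorm, vecMulVec_apply, mul_pow, ← Finset.sum_mul_sum]
  exact Real.sqrt_mul (by positivity) _

open scoped Matrix.Norms.Frobenius

lemma frobNorm_eq_norm (M : Matrix ι κ ℝ) : frobNorm M = ‖M‖ := by
  simp only [frobNorm, frobenius_norm_def, Real.sqrt_eq_rpow, Real.rpow_two, Real.norm_eq_abs,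
    sq_abs]

lemma frobNorm_smul (c : ℝ) (M : Matrix ι κ ℝ) : frobNorm (c • M) = |c| * frobNorm M := by
  rw [frobNorm_eq_norm, frobNorm_eq_norm, norm_smul, Real.norm_eq_abs]

lemma frobNorm_sum_le (s : Finset τ) (M : τ → Matrix ι κ ℝ) :
    frobNorm (∑ t ∈ s, M t) ≤ ∑ t ∈ s, frobNorm (M t) := by
  simpa only [frobNorm_eq_norm] using norm_sum_le s M

lemma euclNorm_mulVec_le_frobNorm_mul (M : Matrix ι κ ℝ) (v : κ → ℝ) :
    euclNorm (M *ᵥ v) ≤ frobNorm M * euclNorm v := by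
  simpa only [frobNorm_eq_norm, euclNorm_eq_norm, ← replicateCol_mulVec,
    frobenius_norm_replicateCol] using frobenius_norm_mul M (replicateCol Unit v)

end FrobeniusNorm

section SpectralNorm

variable {ι κ : Type*} [Fintype ι] [Fintype κ]

open scoped Matrix.Norms.L2Operator

lemma l2_opNorm_transpose [DecidableEq ι] [DecidableEq κ] (M : Matrix ι κ ℝ) : ‖Mᵀ‖ = ‖M‖ := by
  rw [← conjTranspose_eq_transpose_of_trivial, l2_opNorm_conjTranspose]

lemma euclNorm_mulVec_le [DecidableEq κ] (M : Matrix ι κ ℝ) (v : κ → ℝ) :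
    euclNorm (M *ᵥ v) ≤ ‖M‖ * euclNorm v := by
  rw [euclNorm_eq_norm, euclNorm_eq_norm]
  exact l2_opNorm_mulVec M (WithLp.toLp 2 v)

lemma l2_opNorm_one_le [DecidableEq κ] : ‖(1 : Matrix κ κ ℝ)‖ ≤ 1 := by
  rw [← diagonal_one, l2_opNorm_diagonal]
  exact (pi_norm_le_iff_of_nonneg zero_le_one).2 fun _ => norm_one.le

lemma l2_opNorm_le_one_of_transpose_mul_self [DecidableEq κ] {M : Matrix ι κ ℝ}
    (hM : Mᵀ * M = 1) : ‖M‖ ≤ 1 := by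
  refine (sq_le_one_iff₀ (norm_nonneg M)).1 ?_
  rw [sq, ← l2_opNorm_conjTranspose_mul_self, conjTranspose_eq_transpose_of_trivial, hM]
  exact l2_opNorm_one_le

end SpectralNorm

lemma transpose_mul_self_kronecker {R ι κ ρ σ : Type*} [CommSemiring R] [Fintype ι] [Fintype κ]
    [DecidableEq ρ] [DecidableEq σ] {A : Matrix ι ρ R} {B : Matrix κ σ R}
    (hA : Aᵀ * A = 1) (hB : Bᵀ * B = 1) : (A ⊗ₖ B)ᵀ * (A ⊗ₖ B) = 1 := by
  rw [← kroneckerMap_transpose, ← mul_kronecker_mul, hA, hB, one_kronecker_one]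

section Gradient

variable {ι κ ρ σ τ : Type*} [Fintype ι] [Fintype κ] [Fintype ρ] [Fintype σ] [Fintype τ]

/-- The gradient, with respect to the matricized core `G`, of the weighted least-squares loss
`Q(G) = ½ Σₜ wₜ ‖yₜ - A G Kᵀ xₜ‖₂²`. The loss averaged over `T` observations has `wₜ = 1 / T`. -/
noncomputable def leastSquaresGrad (w : τ → ℝ) (A : Matrix ι ρ ℝ) (K : Matrix κ σ ℝ)
    (y : τ → ι → ℝ) (x : τ → κ → ℝ) (G : Matrix ρ σ ℝ) : Matrix ρ σ ℝ :=
  ∑ t, w t • (Aᵀ * vecMulVec ((A * G * Kᵀ) *ᵥ x t - y t) (x t) * K)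

lemma leastSquaresGrad_sub (w : τ → ℝ) (A : Matrix ι ρ ℝ) (K : Matrix κ σ ℝ)
    (y : τ → ι → ℝ) (x : τ → κ → ℝ) (G₁ G₂ : Matrix ρ σ ℝ) :
    leastSquaresGrad w A K y x G₁ - leastSquaresGrad w A K y x G₂ =
      ∑ t, w t • vecMulVec (Aᵀ *ᵥ A *ᵥ (G₁ - G₂) *ᵥ Kᵀ *ᵥ x t) (Kᵀ *ᵥ x t) := by
  simp only [leastSquaresGrad, ← smul_sub, ← Finset.sum_sub_distrib, mul_vecMulVec, vecMulVec_mul,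
    ← mulVec_transpose, ← mulVec_mulVec, ← sub_vecMulVec, ← mulVec_sub, sub_sub_sub_cancel_right,
    ← sub_mulVec]

open scoped Matrix.Norms.L2Operator

lemma frobNorm_vecMulVec_mulVec_le [DecidableEq ρ] [DecidableEq σ]
    (A : Matrix ι ρ ℝ) (K : Matrix κ σ ℝ) (D : Matrix ρ σ ℝ) (x : κ → ℝ) :
    frobNorm (vecMulVec (Aᵀ *ᵥ A *ᵥ D *ᵥ Kᵀ *ᵥ x) (Kᵀ *ᵥ x)) ≤
      ‖A‖ ^ 2 * ‖K‖ ^ 2 * euclNorm x ^ 2 * frobNorm D := by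
  classical
  set z := Kᵀ *ᵥ x
  have hD := frobNorm_nonneg D
  have hz_nonneg := euclNorm_nonneg z
  have hz : euclNorm z ≤ ‖K‖ * euclNorm x :=
    l2_opNorm_transpose K ▸ euclNorm_mulVec_le Kᵀ x
  have hDz : euclNorm (Aᵀ *ᵥ A *ᵥ D *ᵥ z) ≤ ‖A‖ * (‖A‖ * (frobNorm D * euclNorm z)) :=
    calc
      _ ≤ ‖Aᵀ‖ * euclNorm (A *ᵥ D *ᵥ z) := euclNorm_mulVec_le _ _
      _ ≤ ‖A‖ * (‖A‖ * euclNorm (D *ᵥ z)) := by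
        rw [l2_opNorm_transpose]; gcongr; exact euclNorm_mulVec_le _ _
      _ ≤ ‖A‖ * (‖A‖ * (frobNorm D * euclNorm z)) := by
        gcongr; exact euclNorm_mulVec_le_frobNorm_mul D z
  calc
    _ = euclNorm (Aᵀ *ᵥ A *ᵥ D *ᵥ z) * euclNorm z := frobNorm_vecMulVec _ _
    _ ≤ ‖A‖ * (‖A‖ * (frobNorm D * euclNorm z)) * euclNorm z := by gcongr
    _ = ‖A‖ ^ 2 * frobNorm D * euclNorm z ^ 2 := by ring
    _ ≤ ‖A‖ ^ 2 * frobNorm D * (‖K‖ * euclNorm x) ^ 2 := by gcongr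
    _ = ‖A‖ ^ 2 * ‖K‖ ^ 2 * euclNorm x ^ 2 * frobNorm D := by ring

theorem grad_core_lipschitz_general [DecidableEq ρ] [DecidableEq σ] {w : τ → ℝ} (hw : ∀ t, 0 ≤ w t)
    {A : Matrix ι ρ ℝ} {K : Matrix κ σ ℝ} {a k : ℝ} (hA : ‖A‖ ≤ a) (hK : ‖K‖ ≤ k)
    (y : τ → ι → ℝ) (x : τ → κ → ℝ) (G₁ G₂ : Matrix ρ σ ℝ) :
    frobNorm (leastSquaresGrad w A K y x G₁ - leastSquaresGrad w A K y x G₂) ≤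
      a ^ 2 * k ^ 2 * (∑ t, w t * euclNorm (x t) ^ 2) * frobNorm (G₁ - G₂) := by
  rw [leastSquaresGrad_sub, Finset.mul_sum, Finset.sum_mul]
  refine (frobNorm_sum_le _ _).trans (Finset.sum_le_sum fun t _ => ?_)
  have hD := frobNorm_nonneg (G₁ - G₂)
  have hwt := hw t
  rw [frobNorm_smul, abs_of_nonneg hwt]
  calc
    _ ≤ w t * (‖A‖ ^ 2 * ‖K‖ ^ 2 * euclNorm (x t) ^ 2 * frobNorm (G₁ - G₂)) := by
      gcongr; exact frobNorm_vecMulVec_mulVec_le A K (G₁ - G₂) (x t)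
    _ ≤ w t * (a ^ 2 * k ^ 2 * euclNorm (x t) ^ 2 * frobNorm (G₁ - G₂)) := by gcongr
    _ = a ^ 2 * k ^ 2 * (w t * euclNorm (x t) ^ 2) * frobNorm (G₁ - G₂) := by ring

end Gradient

/-- Lipschitz continuity of the gradient of the VAR least-squares loss with respect
to the (matricized) core tensor: with
`∇Q(G) = (1/T) Σ_t A₁ᵀ (A₁ G Kᵀ x_t − y_t) x_tᵀ K`, `K = A₃ ⊗ A₂`, one has
`‖∇Q(G¹) − ∇Q(G²)‖_F ≤ L₁ ‖G¹ − G²‖_F` with `L₁ = (1/T) Σ_t ‖x_t‖₂²`. -/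
theorem grad_core_lipschitz
    (T m p r₁ r₂ r₃ : ℕ) (hT : 1 ≤ T)
    (y : Fin T → Fin m → ℝ) (x : Fin T → Fin p × Fin m → ℝ)
    (A₁ : Matrix (Fin m) (Fin r₁) ℝ) (A₂ : Matrix (Fin m) (Fin r₂) ℝ)
    (A₃ : Matrix (Fin p) (Fin r₃) ℝ)
    (hA₁ : A₁ᵀ * A₁ = 1) (hA₂ : A₂ᵀ * A₂ = 1) (hA₃ : A₃ᵀ * A₃ = 1)
    (K : Matrix (Fin p × Fin m) (Fin r₃ × Fin r₂) ℝ) (hK : K = A₃ ⊗ₖ A₂)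
    (gradQ : Matrix (Fin r₁) (Fin r₃ × Fin r₂) ℝ → Matrix (Fin r₁) (Fin r₃ × Fin r₂) ℝ)
    (hgradQ : ∀ G, gradQ G = (T : ℝ)⁻¹ •
        ∑ t, A₁ᵀ * Matrix.vecMulVec ((A₁ * G * Kᵀ).mulVec (x t) - y t) (x t) * K) :
    ∀ G₁ G₂ : Matrix (Fin r₁) (Fin r₃ × Fin r₂) ℝ,
      frobNorm (gradQ G₁ - gradQ G₂)
        ≤ ((T : ℝ)⁻¹ * ∑ t, euclNorm (x t) ^ 2) * frobNorm (G₁ - G₂) := by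
  have hgrad : gradQ = leastSquaresGrad (fun _ => (T : ℝ)⁻¹) A₁ K y x := by
    funext G
    rw [hgradQ, leastSquaresGrad, Finset.smul_sum]
  have hKK : Kᵀ * K = 1 := hK ▸ transpose_mul_self_kronecker hA₃ hA₂
  simpa only [hgrad, one_pow, one_mul, Finset.mul_sum] using
    grad_core_lipschitz_general (fun _ => by positivity)
      (l2_opNorm_le_one_of_transpose_mul_self hA₁)
      (l2_opNorm_le_one_of_transpose_mul_self hKK) y x
end

section
/- Let ϖ, β, c, b, ρ, κ > 0, let s, s̃, R > 0 with s ≤ R, and for i = 1, 2, 3 let α_i > 0, λ_i > 0, l_i ≥ 0, η_i ≥ 0. Let Δ̂ ∈ ℝ^N and Δg ∈ ℝ^q be vectors, ΔA_i real matrices, and S a subset of the index set of Δg. Assume: (a) (ϖ/4)‖Δ̂‖₂² + Σ_i (α_i λ_i/2)‖ΔA_i‖_F² ≤ β‖Δ̂‖₁ + Σ_i 2 α_i l_i ‖ΔA_i‖_F + β Σ_{j∈S} |Δg_j|; (b) ‖Δ̂‖₂² ≤ 2‖Δg‖₂² + 6 c² R (‖ΔA₁‖_F² + ‖ΔA₂‖_F²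 + ‖ΔA₃‖_F²); (c) α_i λ_i ≥ 6 c² √s · κ for each i; (d) ‖Δ̂‖₁ ≤ √s̃ ‖Δ̂‖₂; (e) Σ_{j∈S} |Δg_j| ≤ b √s ‖Δ̂‖₂; (f) ‖Δg‖₂² ≤ 2√2 · b c √s · ‖Δ̂‖₂; (g) ‖ΔA_i‖_F ≤ 2^{3/2}(η_i/ρ)‖Δ̂‖₂ for each i. Then ‖Δ̂‖₂ ≤ (4β(√s̃ + b√s) + 8√2 · b c · κ + (2^{9/2}/ρ)(α₁ l₁ η₁ + α₂ l₂ η₂ + α₃ l₃ η₃)) / (ϖ + 2κ√s/R). -/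
open Matrix

/-!
Multiplying the decomposition (b) by `2κ√s / R` turns its core part into a term linear in `‖Δ̂‖₂`,
because `s ≤ R`, and makes its factor-matrix part small enough, by (c), to be absorbed by the
quadratic penalties on the left of (a). Hence the curvature `ϖ` improves to `ϖ + 2κ√s / R`. All
remaining terms of (a) are linear in `‖Δ̂‖₂`, so one factor `‖Δ̂‖₂` cancels.
-/

theorem euclNorm_nonneg_s14 {n : Type*} [Fintype n] (v : n → ℝ) : 0 ≤ euclNorm v :=
  Real.sqrt_nonneg _

theorem le_div_of_mul_sq_le_mul {𝕜 : Type*} [Field 𝕜] [LinearOrder 𝕜] [IsStrictOrderedRing 𝕜]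
    {a b x : 𝕜} (ha : 0 < a) (hb : 0 ≤ b) (h : a * x ^ 2 ≤ b * x) : x ≤ b / a := by
  rcases le_or_gt x 0 with hx | hx
  · exact hx.trans (div_nonneg hb ha.le)
  · rw [le_div_iff₀' ha]
    refine le_of_mul_le_mul_right ?_ hx
    rwa [mul_assoc, ← sq]

section ModeSums

variable {ι : Type*} [Fintype ι]

theorem sum_mul_le_sum_mul_mul {𝕜 : Type*} [Semiring 𝕜] [PartialOrder 𝕜] [IsOrderedRing 𝕜]
    {w a h : ι → 𝕜} {D : 𝕜} (hw : ∀ i, 0 ≤ w i) (ha : ∀ i, a i ≤ h i * D) :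
    ∑ i, w i * a i ≤ (∑ i, w i * h i) * D := by
  simp only [Finset.sum_mul, mul_assoc]
  exact Finset.sum_le_sum fun i _ => mul_le_mul_of_nonneg_left (ha i) (hw i)

theorem mul_sq_le_of_sq_le_add_sum {𝕜 : Type*} [Field 𝕜] [LinearOrder 𝕜]
    [IsStrictOrderedRing 𝕜] {κ σ R M K D G : 𝕜} {μ t : ι → 𝕜}
    (hκ : 0 ≤ κ) (hσ : 0 ≤ σ) (hR : 0 < R) (hσR : σ ^ 2 ≤ R) (hM : 0 ≤ M) (hD : 0 ≤ D)
    (ht : ∀ i, 0 ≤ t i) (hdec : D ^ 2 ≤ 2 * G + K * R * ∑ i, t i)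
    (hquad : G ≤ M * σ * D) (hreg : ∀ i, K * σ * κ ≤ μ i) :
    2 * κ * σ / R * D ^ 2 ≤ 4 * M * κ * D + 4 * ∑ i, μ i / 2 * t i := by
  have core_part : 4 * κ * σ / R * G ≤ 4 * M * κ * D :=
    calc 4 * κ * σ / R * G ≤ 4 * κ * σ / R * (M * σ * D) := by gcongr
      _ = 4 * M * κ * D * (σ ^ 2 / R) := by ring
      _ ≤ 4 * M * κ * D := mul_le_of_le_one_right (by positivity) ((div_le_one₀ hR).2 hσR)
  have factor_part : K * σ * κ / 2 * ∑ i, t i ≤ ∑ i, μ i / 2 * t i := by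
    rw [Finset.mul_sum]
    exact Finset.sum_le_sum fun i _ => by gcongr; exacts [ht i, hreg i]
  calc 2 * κ * σ / R * D ^ 2
      ≤ 2 * κ * σ / R * (2 * G + K * R * ∑ i, t i) := by gcongr
    _ = 4 * κ * σ / R * G + 4 * (K * σ * κ / 2 * ∑ i, t i) := by field_simp; ring
    _ ≤ 4 * M * κ * D + 4 * ∑ i, μ i / 2 * t i := by gcongr

/-- `τ` and `σ` play the roles of `√s̃` and `√s`; for a tensor with `d` modes, the Kronecker
perturbation bound has `K = 2dc²`. -/
theorem estimation_error_bound_general {m n : Type*} [Fintype m] [Fintype n]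
    {row col : ι → Type*} [∀ i, Fintype (row i)] [∀ i, Fintype (col i)]
    {ϖ β c b ρ κ σ τ R K : ℝ} {α lam l η : ι → ℝ} {Δ : m → ℝ} {Δg : n → ℝ}
    {ΔA : ∀ i, Matrix (row i) (col i) ℝ} {S : Finset n}
    (hϖ : 0 < ϖ) (hβ : 0 ≤ β) (hc : 0 ≤ c) (hb : 0 ≤ b) (hρ : 0 < ρ) (hκ : 0 ≤ κ)
    (hσ : 0 ≤ σ) (hτ : 0 ≤ τ) (hR : 0 < R) (hσR : σ ^ 2 ≤ R)
    (hα : ∀ i, 0 ≤ α i) (hl : ∀ i, 0 ≤ l i) (hη : ∀ i, 0 ≤ η i)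
    (hbasic : ϖ / 4 * euclNorm Δ ^ 2 + ∑ i, α i * lam i / 2 * frobNorm (ΔA i) ^ 2
      ≤ β * (∑ j, |Δ j|) + (∑ i, 2 * α i * l i * frobNorm (ΔA i)) + β * ∑ j ∈ S, |Δg j|)
    (hdec : euclNorm Δ ^ 2 ≤ 2 * euclNorm Δg ^ 2 + K * R * ∑ i, frobNorm (ΔA i) ^ 2)
    (hreg : ∀ i, K * σ * κ ≤ α i * lam i)
    (hl1 : (∑ j, |Δ j|) ≤ τ * euclNorm Δ)
    (hsupp : (∑ j ∈ S, |Δg j|) ≤ b * σ * euclNorm Δ)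
    (hquad : euclNorm Δg ^ 2 ≤ 2 * √2 * b * c * σ * euclNorm Δ)
    (hhosvd : ∀ i, frobNorm (ΔA i) ≤ 2 * √2 * (η i / ρ) * euclNorm Δ) :
    euclNorm Δ
      ≤ (4 * β * (τ + b * σ) + 8 * √2 * b * c * κ + 16 * √2 / ρ * ∑ i, α i * l i * η i)
        / (ϖ + 2 * κ * σ / R) := by
  have hαlη : 0 ≤ ∑ i, α i * l i * η i :=
    Finset.sum_nonneg fun i _ => mul_nonneg (mul_nonneg (hα i) (hl i)) (hη i)
  have curvature := mul_sq_le_of_sq_le_add_sum hκ hσ hR hσR (by positivity)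
    (euclNorm_nonneg_s14 Δ) (fun i => sq_nonneg (frobNorm (ΔA i))) hdec hquad hreg
  have linear_terms : ∑ i, 2 * α i * l i * frobNorm (ΔA i)
      ≤ 4 * √2 / ρ * (∑ i, α i * l i * η i) * euclNorm Δ := by
    refine (sum_mul_le_sum_mul_mul
      (fun i => mul_nonneg (mul_nonneg zero_le_two (hα i)) (hl i)) hhosvd).trans_eq ?_
    rw [Finset.mul_sum]
    exact congrArg (· * _) (Finset.sum_congr rfl fun i _ => by ring)
  have sparsity := mul_le_mul_of_nonneg_left (add_le_add hl1 hsupp) hβ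
  refine le_div_of_mul_sq_le_mul (by positivity) (by positivity) ?_
  linear_combination 4 * hbasic + 4 * linear_terms + 4 * sparsity + curvature

end ModeSums

/-- Deterministic core of the main non-asymptotic error bound: the basic
inequality (a), the Kronecker-perturbation decomposition (b), the
regularization-parameter lower bounds (c), the sparsity comparisons (d)–(f)
and the HOSVD perturbation bounds (g) together imply
`‖Δ̂‖₂ ≤ (4β(√s̃ + b√s) + 8√2·bc·κ + (2^{9/2}/ρ)Σᵢ αᵢlᵢηᵢ) / (ϖ + 2κ√s/R)`. -/
theorem estimation_error_bound
    (N q : ℕ)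
    (ϖ β c b ρ κ s st R : ℝ)
    (hϖ : 0 < ϖ) (hβ : 0 < β) (hc : 0 < c) (hb : 0 < b) (hρ : 0 < ρ) (hκ : 0 < κ)
    (hs : 0 < s) (hst : 0 < st) (hR : 0 < R) (hsR : s ≤ R)
    (α lam l η : Fin 3 → ℝ)
    (hα : ∀ i, 0 < α i) (hlam : ∀ i, 0 < lam i)
    (hl : ∀ i, 0 ≤ l i) (hη : ∀ i, 0 ≤ η i)
    (Δ : Fin N → ℝ) (Δg : Fin q → ℝ)
    (mdim rdim : Fin 3 → ℕ)
    (ΔA : ∀ i : Fin 3, Matrix (Fin (mdim i)) (Fin (rdim i)) ℝ)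
    (S : Finset (Fin q))
    -- (a) basic inequality
    (ha : ϖ / 4 * euclNorm Δ ^ 2 + ∑ i, α i * lam i / 2 * frobNorm (ΔA i) ^ 2
            ≤ β * (∑ j, |Δ j|) + (∑ i, 2 * α i * l i * frobNorm (ΔA i))
              + β * ∑ j ∈ S, |Δg j|)
    -- (b) Kronecker perturbation decomposition
    (hdec : euclNorm Δ ^ 2 ≤ 2 * euclNorm Δg ^ 2
              + 6 * c ^ 2 * R * (frobNorm (ΔA 0) ^ 2 + frobNorm (ΔA 1) ^ 2
                  + frobNorm (ΔA 2) ^ 2))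
    -- (c) regularization parameter lower bound
    (hreg : ∀ i, 6 * c ^ 2 * Real.sqrt s * κ ≤ α i * lam i)
    -- (d) ℓ¹–ℓ² comparison for Δ̂
    (hl1 : (∑ j, |Δ j|) ≤ Real.sqrt st * euclNorm Δ)
    -- (e) support comparison for Δg
    (hsupp : (∑ j ∈ S, |Δg j|) ≤ b * Real.sqrt s * euclNorm Δ)
    -- (f) quadratic comparison for Δg
    (hquad : euclNorm Δg ^ 2 ≤ 2 * Real.sqrt 2 * b * c * Real.sqrt s * euclNorm Δ)
    -- (g) HOSVD perturbation bounds
    (hhosvd : ∀ i, frobNorm (ΔA i) ≤ 2 * Real.sqrt 2 * (η i / ρ) * euclNorm Δ) :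
    euclNorm Δ
      ≤ (4 * β * (Real.sqrt st + b * Real.sqrt s) + 8 * Real.sqrt 2 * b * c * κ
           + 16 * Real.sqrt 2 / ρ
               * (α 0 * l 0 * η 0 + α 1 * l 1 * η 1 + α 2 * l 2 * η 2))
         / (ϖ + 2 * κ * Real.sqrt s / R) := by
  simpa only [Fin.sum_univ_three] using
    estimation_error_bound_general hϖ hβ.le hc.le hb.le hρ hκ.le (Real.sqrt_nonneg s)
      (Real.sqrt_nonneg st) hR ((Real.sq_sqrt hs.le).trans_le hsR) (fun i => (hα i).le) hl hη ha
      (by simpa only [Fin.sum_univ_three] using hdec) hreg hl1 hsupp hquad hhosvd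
end
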